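/- arXiv:2506.19989 — 6 statements merged into one kernel-verified Lean document; each statement's English description precedes it below -/
import Mathlib

section
/- Let A ≥ b₂ > b₁ > 0 and set θ₀ = (b₂ − b₁)/(A − b₁). Then for every N ∈ ℕ and all real numbers a₁, …, a_N satisfying ∑_{j=1}^{N} a_j ≥ b₂·N and a_j ≤ A for every 1 ≤ j ≤ N, there exist a natural number ℓ ≥ θ₀·N and indices 1 ≤ n₁ < n₂ < ⋯ < n_ℓ ≤ N such that for every i ∈ {1, …, ℓ} and every integer n with n_i < n ≤ N one has ∑_{j=n_i}^{n−1} a_j ≥ b₁·(n − n_i). -/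
open Classical in
theorem pliss_count (N : ℕ) (T : ℕ → ℝ) (D : ℝ) (hD : 0 ≤ D)
    (hT : ∀ k, k < N → T (k + 1) ≤ T k + D) (d : ℕ) :
    ∀ k, k + d = N → ∀ k', k ≤ k' → k' ≤ N → T N - T k' ≤ D *
      (((Finset.Ico k N).filter (fun p => ∀ q, p < q → q < N → T p ≤ T q)).card : ℝ) := by
  induction d with
  | zero =>
    intro k hk k' h1 h2
    have : k' = N := by omega
    subst this
    simp only [sub_self]
    positivity
  | succ d ih =>
    intro k hk k' h1 h2
    have ih' := ih (k + 1) (by omega)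
    have hI : Finset.Ico k N = insert k (Finset.Ico (k + 1) N) := by
      ext x
      simp only [Finset.mem_Ico, Finset.mem_insert]
      omega
    rw [hI, Finset.filter_insert]
    split_ifs with hP
    · rw [Finset.card_insert_of_notMem (by simp)]
      push_cast
      rcases Nat.eq_or_lt_of_le h1 with h | h
      · subst h
        have := ih' (k + 1) le_rfl (by omega)
        have := hT k (by omega)
        linarith
      · have := ih' k' h h2
        linarith
    · rcases Nat.eq_or_lt_of_le h1 with h | h
      · subst h
        push Not at hP
        obtain ⟨q, hq1, hq2, hq3⟩ := hP
        have := ih' q hq1 hq2.le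
        linarith
      · exact ih' k' h h2

/-- **The Pliss Lemma.**  Let `A ≥ b₂ > b₁ > 0` and `θ₀ = (b₂ − b₁)/(A − b₁)`.  For every
`N ∈ ℕ` and reals `a₁, …, a_N` with `∑_{j=1}^N a_j ≥ b₂·N` and `a_j ≤ A` for `1 ≤ j ≤ N`,
there exist `ℓ ≥ θ₀·N` and indices `1 ≤ n₁ < ⋯ < n_ℓ ≤ N` such that for every `i` and every
`n` with `n_i < n ≤ N` one has `∑_{j=n_i}^{n−1} a_j ≥ b₁·(n − n_i)`. -/
theorem pliss_lemma (A b₁ b₂ : ℝ) (hA : b₂ ≤ A) (hb : b₁ < b₂) (hb₁ : 0 < b₁)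
    (N : ℕ) (a : ℕ → ℝ)
    (hsum : b₂ * (N : ℝ) ≤ ∑ j ∈ Finset.Icc 1 N, a j)
    (hbdd : ∀ j : ℕ, 1 ≤ j → j ≤ N → a j ≤ A) :
    ∃ (ℓ : ℕ) (n : ℕ → ℕ),
      ((b₂ - b₁) / (A - b₁)) * (N : ℝ) ≤ (ℓ : ℝ) ∧
      (∀ i : ℕ, 1 ≤ i → i ≤ ℓ → 1 ≤ n i ∧ n i ≤ N) ∧
      (∀ i j : ℕ, 1 ≤ i → i < j → j ≤ ℓ → n i < n j) ∧
      (∀ i : ℕ, 1 ≤ i → i ≤ ℓ → ∀ m : ℕ, n i < m → m ≤ N →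
        b₁ * ((m : ℝ) - (n i : ℝ)) ≤ ∑ j ∈ Finset.Ico (n i) m, a j) := by
  classical
  have hD : 0 < A - b₁ := by linarith
  set T : ℕ → ℝ := fun k => ∑ j ∈ Finset.Ico 1 (k + 1), a j - b₁ * k with hTdef
  have hT : ∀ k, k < N → T (k + 1) ≤ T k + (A - b₁) := by
    intro k hk
    have h1 := hbdd (k + 1) (by omega) (by omega)
    simp only [hTdef]
    rw [Finset.sum_Ico_succ_top (by omega)]
    push_cast
    linarith
  have hc := pliss_count N T (A - b₁) hD.le hT N 0 (by omega) 0 le_rfl (by omega)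
  set s := (Finset.Ico 0 N).filter (fun p => ∀ q, p < q → q < N → T p ≤ T q) with hs
  have hT0 : T 0 = 0 := by simp [hTdef]
  have hTN : (b₂ - b₁) * N ≤ T N := by
    have : Finset.Icc 1 N = Finset.Ico 1 (N + 1) := by
      ext x
      simp only [Finset.mem_Icc, Finset.mem_Ico]
      omega
    rw [this] at hsum
    simp only [hTdef]
    linarith
  let n : ℕ → ℕ := fun i => if h : i - 1 < s.card then s.orderEmbOfFin rfl ⟨i - 1, h⟩ + 1 else 0
  have hn : ∀ i, 1 ≤ i → i ≤ s.card → ∃ p ∈ s, n i = p + 1 := by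
    intro i h1 h2
    have h : i - 1 < s.card := by omega
    exact ⟨_, Finset.orderEmbOfFin_mem s rfl ⟨i - 1, h⟩, by simp only [n, dif_pos h]⟩
  refine ⟨s.card, n, ?_, ?_, ?_, ?_⟩
  · rw [div_mul_eq_mul_div, div_le_iff₀ hD]
    linarith
  · intro i h1 h2
    obtain ⟨p, hp, hnp⟩ := hn i h1 h2
    simp only [hs, Finset.mem_filter, Finset.mem_Ico] at hp
    omega
  · intro i j h1 h2 h3
    have hi : i - 1 < s.card := by omega
    have hj : j - 1 < s.card := by omega
    simp only [n, dif_pos hi, dif_pos hj]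
    have : s.orderEmbOfFin rfl ⟨i - 1, hi⟩ < s.orderEmbOfFin rfl ⟨j - 1, hj⟩ := by
      rw [OrderEmbedding.lt_iff_lt, Fin.mk_lt_mk]
      omega
    omega
  · intro i h1 h2 m hm hmN
    obtain ⟨p, hp, hnp⟩ := hn i h1 h2
    simp only [hs, Finset.mem_filter, Finset.mem_Ico] at hp
    rw [hnp] at hm ⊢
    obtain ⟨q, rfl⟩ : ∃ q, m = q + 1 := ⟨m - 1, by omega⟩
    have h := hp.2 q (by omega) (by omega)
    have hsm := Finset.sum_Ico_consecutive a (show 1 ≤ p + 1 by omega) hm.le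
    simp only [hTdef] at h
    push_cast
    linarith
end

section
/- Let K ≥ η > λ > 1 and set θ₀ = (log η − log λ)/(log K − log λ). Then for every N ∈ ℕ and all positive real numbers c₁, …, c_N satisfying c_j ≥ K^{-1} for every 1 ≤ j ≤ N and ∏_{j=1}^{N} c_j ≤ η^{−N}, there exist a natural number ℓ ≥ θ₀·N and indices 1 ≤ n₁ < ⋯ < n_ℓ ≤ N such that for every i ∈ {1, …, ℓ} and every integer n with n_i < n ≤ N one has ∏_{j=n_i}^{n−1} c_j ≤ λ^{−(n − n_i)}. -/
/-- **Multiplicative Pliss Lemma.**  Let `K ≥ η > λ > 1` and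
`θ₀ = (log η − log λ)/(log K − log λ)`.  For every `N ∈ ℕ` and positive reals
`c₁, …, c_N` with `c_j ≥ K⁻¹` for `1 ≤ j ≤ N` and `∏_{j=1}^N c_j ≤ η^{−N}`, there exist
`ℓ ≥ θ₀·N` and indices `1 ≤ n₁ < ⋯ < n_ℓ ≤ N` such that for every `i` and every `n` with
`n_i < n ≤ N` one has `∏_{j=n_i}^{n−1} c_j ≤ λ^{−(n − n_i)}`. -/
theorem pliss_lemma_multiplicative (K η lam : ℝ) (hK : η ≤ K) (hη : lam < η) (hlam : 1 < lam)
    (N : ℕ) (c : ℕ → ℝ)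
    (hpos : ∀ j : ℕ, 1 ≤ j → j ≤ N → 0 < c j)
    (hlow : ∀ j : ℕ, 1 ≤ j → j ≤ N → K⁻¹ ≤ c j)
    (hprod : ∏ j ∈ Finset.Icc 1 N, c j ≤ (η ^ N)⁻¹) :
    ∃ (ℓ : ℕ) (n : ℕ → ℕ),
      ((Real.log η - Real.log lam) / (Real.log K - Real.log lam)) * (N : ℝ) ≤ (ℓ : ℝ) ∧
      (∀ i : ℕ, 1 ≤ i → i ≤ ℓ → 1 ≤ n i ∧ n i ≤ N) ∧
      (∀ i j : ℕ, 1 ≤ i → i < j → j ≤ ℓ → n i < n j) ∧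
      (∀ i : ℕ, 1 ≤ i → i ≤ ℓ → ∀ m : ℕ, n i < m → m ≤ N →
        ∏ j ∈ Finset.Ico (n i) m, c j ≤ (lam ^ (m - n i))⁻¹) := by
  classical
  have hl0 : 0 < lam := by linarith
  have hη0 : 0 < η := by linarith
  have hK0 : 0 < K := by linarith
  have hlogη : Real.log lam < Real.log η := Real.log_lt_log hl0 hη
  have hlogK : Real.log η ≤ Real.log K := Real.log_le_log hη0 hK
  set B := Real.log K - Real.log lam with hB
  have hB0 : 0 < B := by linarith
  let a : ℕ → ℝ := fun j => -Real.log (c j) - Real.log lam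
  let T : ℕ → ℝ := fun k => ∑ j ∈ Finset.Ico k (N+1), a j
  let G : Finset ℕ := (Finset.Icc 1 N).filter (fun n => ∀ m, n < m → m ≤ N + 1 → T m ≤ T n)
  have ha : ∀ j, 1 ≤ j → j ≤ N → a j ≤ B := by
    intro j h1 h2
    have := Real.log_le_log (inv_pos.mpr hK0) (hlow j h1 h2)
    rw [Real.log_inv] at this
    simp only [a, hB]; linarith
  have key : ∀ d k, 1 ≤ k → k + d = N + 1 →
      T k ≤ B * ((G.filter (fun n => k ≤ n)).card : ℝ) := by
    intro d
    induction d using Nat.strong_induction_on with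
    | _ d ih =>
      intro k hk hkd
      rcases Nat.eq_zero_or_pos d with h0 | hd
      · have : T k = 0 := by
          simp only [T]; rw [Finset.Ico_eq_empty (by omega)]; simp
        rw [this]; positivity
      · by_cases hg : k ∈ G
        · have h1 := ih (d-1) (by omega) (k+1) (by omega) (by omega)
          have h2 : T k = a k + T (k+1) := by
            simp only [T]; exact Finset.sum_eq_sum_Ico_succ_bot (by omega) _
          have h3 := ha k hk (by omega)
          have h4 : G.filter (fun n => k ≤ n) = insert k (G.filter (fun n => k + 1 ≤ n)) := by
            ext x
            simp only [Finset.mem_filter, Finset.mem_insert]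
            constructor
            · rintro ⟨hx, hx2⟩
              by_cases h : x = k
              · exact Or.inl h
              · exact Or.inr ⟨hx, by omega⟩
            · rintro (rfl | ⟨hx, hx2⟩)
              · exact ⟨hg, le_rfl⟩
              · exact ⟨hx, by omega⟩
          rw [h4, Finset.card_insert_of_notMem (by simp)]
          push_cast
          linarith
        · have : ∃ m, k < m ∧ m ≤ N + 1 ∧ T k < T m := by
            by_contra! hcon
            exact hg (Finset.mem_filter.mpr ⟨Finset.mem_Icc.mpr ⟨hk, by omega⟩, hcon⟩)
          obtain ⟨m, hm1, hm2, hm3⟩ := this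
          have h1 := ih (N+1-m) (by omega) m (by omega) (by omega)
          have h2 : (G.filter (fun n => m ≤ n)).card ≤ (G.filter (fun n => k ≤ n)).card := by
            apply Finset.card_le_card
            intro x
            simp only [Finset.mem_filter]
            rintro ⟨hx, hx2⟩
            exact ⟨hx, by omega⟩
          have h3 : ((G.filter (fun n => m ≤ n)).card : ℝ) ≤ (G.filter (fun n => k ≤ n)).card := by
            exact_mod_cast h2
          have h4 := mul_le_mul_of_nonneg_left h3 hB0.le
          linarith
  have hcount : (Real.log η - Real.log lam) * N ≤ B * (G.card : ℝ) := by
    have h1 := key N 1 le_rfl (by omega)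
    have h2 : ((G.filter (fun n => 1 ≤ n)).card : ℝ) ≤ G.card := by
      exact_mod_cast Finset.card_filter_le _ _
    have h3 := mul_le_mul_of_nonneg_left h2 hB0.le
    have hIcc : Finset.Icc 1 N = Finset.Ico 1 (N+1) := by
      ext x; simp only [Finset.mem_Icc, Finset.mem_Ico]; omega
    have h4 : ∑ j ∈ Finset.Icc 1 N, Real.log (c j) ≤ -(N * Real.log η) := by
      rw [← Real.log_prod (fun j hj => (hpos j (Finset.mem_Icc.mp hj).1 (Finset.mem_Icc.mp hj).2).ne'),
        ← Real.log_pow, ← Real.log_inv]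
      exact Real.log_le_log (Finset.prod_pos fun j hj =>
        hpos j (Finset.mem_Icc.mp hj).1 (Finset.mem_Icc.mp hj).2) hprod
    have h5 : T 1 = -∑ j ∈ Finset.Icc 1 N, Real.log (c j) - N * Real.log lam := by
      simp only [T, a, hIcc, Finset.sum_sub_distrib, Finset.sum_neg_distrib]
      simp
    linarith
  have hgood : ∀ n ∈ G, ∀ m, n < m → m ≤ N →
      ∏ j ∈ Finset.Ico n m, c j ≤ (lam ^ (m - n))⁻¹ := by
    intro n hn m hnm hm
    obtain ⟨hn1, hn2⟩ := Finset.mem_filter.mp hn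
    have hn1' := Finset.mem_Icc.mp hn1
    have h1 := hn2 m hnm (by omega)
    have h2 : ∑ j ∈ Finset.Ico n m, a j + T m = T n :=
      Finset.sum_Ico_consecutive _ hnm.le (by omega)
    have hp : ∀ j ∈ Finset.Ico n m, 0 < c j := by
      intro j hj
      have := Finset.mem_Ico.mp hj
      exact hpos j (by omega) (by omega)
    have h3 : ∑ j ∈ Finset.Ico n m, a j =
        -∑ j ∈ Finset.Ico n m, Real.log (c j) - ((m - n : ℕ) : ℝ) * Real.log lam := by
      simp only [a, Finset.sum_sub_distrib, Finset.sum_neg_distrib]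
      simp
    rw [← Real.log_le_log_iff (Finset.prod_pos hp) (by positivity),
      Real.log_prod (fun j hj => (hp j hj).ne'), Real.log_inv, Real.log_pow]
    linarith
  let e := G.orderEmbOfFin rfl
  let n : ℕ → ℕ := fun i => if h : i - 1 < G.card then e ⟨i - 1, h⟩ else 0
  have hnG : ∀ i, 1 ≤ i → i ≤ G.card → n i ∈ G := by
    intro i h1 h2
    have h : i - 1 < G.card := by omega
    simp only [n, dif_pos h]
    exact Finset.orderEmbOfFin_mem G rfl _
  refine ⟨G.card, n, ?_, ?_, ?_, ?_⟩
  · rw [div_mul_eq_mul_div, div_le_iff₀ hB0]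
    linarith
  · intro i h1 h2
    exact Finset.mem_Icc.mp (Finset.mem_filter.mp (hnG i h1 h2)).1
  · intro i j h1 h2 h3
    have hi : i - 1 < G.card := by omega
    have hj : j - 1 < G.card := by omega
    simp only [n, dif_pos hi, dif_pos hj]
    apply e.strictMono
    simp only [Fin.mk_lt_mk]
    omega
  · intro i h1 h2 m hm1 hm2
    exact hgood _ (hnG i h1 h2) m hm1 hm2
end

section
/- Let β ∈ (0,1), W ⊆ X, let t ≥ 1 be an integer and t' > 0 a real number. If x is a (β,W)-forward recurrence Pliss time for the orbit segment (x,t), and f_t(x) is a (β,W)-forward recurrence Pliss time for the orbit segment (f_t(x), t'), then x is a (β,W)-forward recurrence Pliss time for the orbit segment (x, t+t'). -/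
/-- `x` is a `(β, W)`-forward recurrence Pliss time for the orbit segment `(x, t)`:
for every integer `0 ≤ s ≤ ⌊t⌋`, the number of integers `τ ∈ [0, s]` with `f_τ(x) ∈ W`
is at most `β·(s+1)`. -/
def ForwardRecPliss {X : Type*} (f : ℝ → X → X) (β : ℝ) (W : Set X) (x : X) (t : ℝ) : Prop :=
  ∀ s : ℕ, s ≤ ⌊t⌋₊ →
    ({τ : ℕ | τ ≤ s ∧ f (τ : ℝ) x ∈ W}.ncard : ℝ) ≤ β * ((s : ℝ) + 1)

/-- **Gluing of forward recurrence Pliss times.**  If `t ≥ 1` is an integer, `t' > 0`,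
`x` is a `(β,W)`-forward recurrence Pliss time for `(x,t)` and `f_t(x)` is a
`(β,W)`-forward recurrence Pliss time for `(f_t(x), t')`, then `x` is a `(β,W)`-forward
recurrence Pliss time for `(x, t+t')`. -/
theorem glue_recurrence_pliss {X : Type*} [MetricSpace X] [CompactSpace X]
    (f : ℝ → X → X)
    (hcont : Continuous fun p : ℝ × X => f p.1 p.2)
    (hf0 : ∀ x : X, f 0 x = x)
    (hadd : ∀ s t : ℝ, ∀ x : X, f (s + t) x = f s (f t x))
    (β : ℝ) (hβ : β ∈ Set.Ioo (0 : ℝ) 1)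
    (W : Set X) (x : X)
    (t : ℕ) (ht : 1 ≤ t) (t' : ℝ) (ht' : 0 < t')
    (h₁ : ForwardRecPliss f β W x (t : ℝ))
    (h₂ : ForwardRecPliss f β W (f (t : ℝ) x) t') :
    ForwardRecPliss f β W x ((t : ℝ) + t') := by
  intro s hs
  have hfl : ⌊(t : ℝ) + t'⌋₊ = t + ⌊t'⌋₊ := by
    rw [add_comm, Nat.floor_add_natCast ht'.le, add_comm]
  rw [hfl] at hs
  by_cases hst : s ≤ t
  · exact h₁ s (by simpa using hst)
  · have hst2 : t ≤ s := by omega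
    have a := h₁ (t - 1) (by simp)
    have b := h₂ (s - t) (by omega)
    rw [Nat.cast_sub ht] at a
    rw [Nat.cast_sub hst2] at b
    have hfin : ∀ (n : ℕ) (y : X), {τ : ℕ | τ ≤ n ∧ f (τ : ℝ) y ∈ W}.Finite :=
      fun n y => (Set.finite_Iic n).subset fun τ h => h.1
    have hsub : {τ : ℕ | τ ≤ s ∧ f (τ : ℝ) x ∈ W} ⊆
        {τ : ℕ | τ ≤ t - 1 ∧ f (τ : ℝ) x ∈ W} ∪
        (fun τ => τ + t) '' {τ : ℕ | τ ≤ s - t ∧ f (τ : ℝ) (f (t : ℝ) x) ∈ W} := by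
      rintro τ ⟨h1, h2⟩
      by_cases h : τ ≤ t - 1
      · exact Or.inl ⟨h, h2⟩
      · refine Or.inr ⟨τ - t, ⟨by omega, ?_⟩, by simp only; omega⟩
        rw [← hadd, Nat.cast_sub (by omega), sub_add_cancel]
        exact h2
    have c := Set.ncard_le_ncard hsub ((hfin _ _).union ((hfin _ _).image _))
    have d := c.trans ((Set.ncard_union_le _ _).trans
      (Nat.add_le_add_left (Set.ncard_image_le (hfin _ _)) _))
    have e := (Nat.cast_le (α := ℝ)).2 d
    rw [Nat.cast_add] at e
    push_cast at a
    linarith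
end

section
/- Let X be a compact metric space, let (μ_n) be a sequence of Borel probability measures on X converging to a Borel probability measure μ in the weak-* topology, let c ≥ 0, and let (E_n) be a sequence of subsets of X with μ_n(E_n) ≥ c for every n (measures being evaluated as outer measures on arbitrary sets). Define E := ⋂_{N∈ℕ} closure(⋃_{n ≥ N} E_n), the set of all limit points of sequences (x_{k_i}) with x_{k_i} ∈ E_{n_i} and n_i → ∞. Then E is compact and μ(E) ≥ c. -/
open MeasureTheory Filter Topology

/-- **Weak-* limits and limit sets.**  Let `X` be a compact metric space, `(μ_n)` Borel
probability measures converging weak-* to `μ`, `c ≥ 0`, and `E_n ⊆ X` sets with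
`μ_n(E_n) ≥ c` (outer measure).  Then `E := ⋂_N closure(⋃_{n ≥ N} E_n)` is compact and
`μ(E) ≥ c`. -/
theorem limit_of_large_sets {X : Type*} [MetricSpace X] [CompactSpace X]
    [MeasurableSpace X] [BorelSpace X]
    (μs : ℕ → Measure X) (hprob : ∀ n, IsProbabilityMeasure (μs n))
    (μ : Measure X) [IsProbabilityMeasure μ]
    (hconv : ∀ φ : C(X, ℝ),
      Tendsto (fun n => ∫ x, φ x ∂(μs n)) atTop (𝓝 (∫ x, φ x ∂μ)))
    (c : ℝ) (hc : 0 ≤ c)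
    (E : ℕ → Set X) (hE : ∀ n, ENNReal.ofReal c ≤ μs n (E n)) :
    IsCompact (⋂ N : ℕ, closure (⋃ n ≥ N, E n)) ∧
    ENNReal.ofReal c ≤ μ (⋂ N : ℕ, closure (⋃ n ≥ N, E n)) := by
  have hcl : ∀ N : ℕ, IsClosed (closure (⋃ n ≥ N, E n)) := fun N => isClosed_closure
  refine ⟨(isClosed_iInter hcl).isCompact, ?_⟩
  have hanti : Antitone (fun N : ℕ => closure (⋃ n ≥ N, E n)) := by
    intro a b hab
    exact closure_mono (Set.biUnion_subset_biUnion_left fun n (hn : b ≤ n) => hab.trans hn)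
  let ν : ℕ → ProbabilityMeasure X := fun n => ⟨μs n, hprob n⟩
  let ν' : ProbabilityMeasure X := ⟨μ, inferInstance⟩
  have hlim : Tendsto ν atTop (𝓝 ν') := by
    rw [ProbabilityMeasure.tendsto_iff_forall_integral_tendsto]
    intro f
    exact hconv f.toContinuousMap
  rw [hanti.measure_iInter (fun N => (hcl N).measurableSet.nullMeasurableSet)
    ⟨0, measure_ne_top _ _⟩]
  refine le_iInf fun N => ?_
  have h1 := ProbabilityMeasure.limsup_measure_closed_le_of_tendsto hlim (hcl N)
  refine le_trans ?_ h1
  refine le_limsup_of_frequently_le (Eventually.frequently ?_)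
  filter_upwards [eventually_ge_atTop N] with n hn
  exact (hE n).trans (measure_mono
    ((Set.subset_biUnion_of_mem (u := E) (show n ∈ {n | n ≥ N} from hn)).trans subset_closure))
end

section
/- Let (f_t)_{t∈ℝ} be a continuous flow on a compact metric space X, let U ⊆ X be open, and suppose the set Λ := {x ∈ X : f_t(x) ∈ closure(U) for all t ∈ ℝ} is nonempty and satisfies Λ ⊆ U (so U is an isolating neighborhood of the maximal invariant set Λ). Let U₁ be any open set with Λ ⊆ U₁ ⊆ U, and let φ : X → ℝ be continuous. Then P(O(U), φ) = P(O(U₁), φ) = P(Λ×(0,∞), φ); that is, the pressures of the collections of orbit segments contained in U, of those contained in U₁, and of those contained in Λ all equal the topological pressure P(φ, X|_Λ) of the flow restricted to Λ. -/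
open Filter Topology
open scoped ENNReal

variable {X : Type*}

/-- A set `E` is `(t, δ)`-separated for the flow `f`: any two distinct points of `E`
are more than `δ` apart at some time `s ∈ [0, t]`. -/
def IsSeparatedSet [MetricSpace X] (f : ℝ → X → X) (t δ : ℝ) (E : Set X) : Prop :=
  ∀ x ∈ E, ∀ y ∈ E, x ≠ y → ∃ s ∈ Set.Icc (0 : ℝ) t, δ < dist (f s x) (f s y)

/-- Partition function `Λ(C, φ, δ, t)`: the supremum of `∑_{x∈E} exp(∫₀ᵗ φ(f_s x) ds)`
over finite `(t,δ)`-separated subsets `E` of `C_t = {x : (x,t) ∈ C}`. -/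
noncomputable def partitionFn [MetricSpace X] (f : ℝ → X → X) (φ : X → ℝ)
    (C : Set (X × ℝ)) (δ t : ℝ) : ℝ≥0∞ :=
  ⨆ (E : Finset X) (_ : (E : Set X) ⊆ {x | (x, t) ∈ C})
    (_ : IsSeparatedSet f t δ (E : Set X)),
      ∑ x ∈ E, ENNReal.ofReal (Real.exp (∫ s in (0:ℝ)..t, φ (f s x)))

/-- Pressure of `φ` on the collection `C` at scale `δ`:
`P(C, φ, δ) = limsup_{t→∞} (1/t) log Λ(C, φ, δ, t)`. -/
noncomputable def pressureAt [MetricSpace X] (f : ℝ → X → X) (φ : X → ℝ)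
    (C : Set (X × ℝ)) (δ : ℝ) : EReal :=
  Filter.limsup
    (fun t : ℝ => (((1 : ℝ) / t : ℝ) : EReal) * ENNReal.log (partitionFn f φ C δ t))
    Filter.atTop

/-- Pressure of `φ` on the collection `C`: `P(C, φ) = lim_{δ→0⁺} P(C, φ, δ)` (the limit
exists since `P(C, φ, δ)` is nonincreasing in `δ`, so it equals the limsup as `δ → 0⁺`). -/
noncomputable def pressure [MetricSpace X] (f : ℝ → X → X) (φ : X → ℝ)
    (C : Set (X × ℝ)) : EReal :=
  Filter.limsup (fun δ : ℝ => pressureAt f φ C δ) (nhdsWithin 0 (Set.Ioi 0))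

/-- `O(V)`: the collection of finite orbit segments `(x, t)`, `t > 0`, entirely contained
in `V`. -/
def orbitSegments (f : ℝ → X → X) (V : Set X) : Set (X × ℝ) :=
  {p : X × ℝ | 0 < p.2 ∧ ∀ s ∈ Set.Ico (0 : ℝ) p.2, f s p.1 ∈ V}

namespace PEq

open Set

lemma unif {X : Type*} [MetricSpace X] [CompactSpace X] (f : ℝ → X → X)
    (hcont : Continuous fun p : ℝ × X => f p.1 p.2) (τ δ : ℝ) (hδ : 0 < δ) :
    ∃ η > 0, ∀ x y : X, dist x y < η → ∀ s ∈ Icc (0:ℝ) τ, dist (f s x) (f s y) ≤ δ := by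
  have hc : IsCompact (Icc (0:ℝ) τ ×ˢ (univ : Set X)) := isCompact_Icc.prod isCompact_univ
  have hu := hc.uniformContinuousOn_of_continuous hcont.continuousOn
  rw [Metric.uniformContinuousOn_iff] at hu
  obtain ⟨η, hη, h⟩ := hu δ hδ
  refine ⟨η, hη, fun x y hxy s hs => ?_⟩
  refine (h (s, x) ⟨hs, mem_univ _⟩ (s, y) ⟨hs, mem_univ _⟩ ?_).le
  simpa [Prod.dist_eq, hη] using hxy

/-- maximal separated subset. -/
lemma exists_max {X : Type*} [MetricSpace X] [CompactSpace X] (f : ℝ → X → X)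
    (hcont : Continuous fun p : ℝ × X => f p.1 p.2) (τ δ : ℝ) (hδ : 0 < δ) (A : Set X) :
    ∃ E : Finset X, (E : Set X) ⊆ A ∧ IsSeparatedSet f τ δ (E : Set X) ∧
      ∀ x ∈ A, ∃ y ∈ E, ∀ s ∈ Icc (0:ℝ) τ, dist (f s x) (f s y) ≤ δ := by
  classical
  obtain ⟨η, hη, hu⟩ := unif f hcont τ δ hδ
  obtain ⟨F, -, hFfin, hF⟩ := (isCompact_univ (X := X)).finite_cover_balls (half_pos hη)
  lift F to Finset X using hFfin
  have hex : ∀ x : X, ∃ c ∈ F, dist x c < η / 2 := by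
    intro x
    have := hF (mem_univ x)
    simpa using this
  choose c hcF hc using hex
  have hbound : ∀ E : Finset X, IsSeparatedSet f τ δ (E : Set X) → E.card ≤ F.card := by
    intro E hE
    refine Finset.card_le_card_of_injOn c (fun x _ => hcF x) ?_
    intro x hx y hy hxy
    by_contra hne
    obtain ⟨s, hs, hlt⟩ := hE x hx y hy hne
    have h1 : dist x y < η := by
      have := dist_triangle_right x y (c x)
      have h2 := hc x
      have h3 := hc y
      rw [← hxy] at h3
      linarith
    exact absurd (hu x y h1 s hs) (not_le.mpr hlt)
  let S : Set ℕ := {n | ∃ E : Finset X, (E : Set X) ⊆ A ∧ IsSeparatedSet f τ δ (E : Set X) ∧ E.card = n}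
  have hSne : S.Nonempty := ⟨0, ∅, by simp, by intro x hx; simp at hx, rfl⟩
  have hSb : BddAbove S := ⟨F.card, by rintro n ⟨E, -, hE, rfl⟩; exact hbound E hE⟩
  obtain ⟨E, hEA, hE, hcard⟩ := Nat.sSup_mem hSne hSb
  refine ⟨E, hEA, hE, fun x hx => ?_⟩
  by_contra! hcon
  have hxE : x ∉ E := by
    intro h
    obtain ⟨s, hs, hlt⟩ := hcon x h
    simp at hlt; linarith
  have hmem : (insert x E).card ∈ S := by
    refine ⟨insert x E, ?_, ?_, rfl⟩
    · intro y hy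
      rcases Finset.mem_insert.1 (Finset.mem_coe.1 hy) with rfl | h
      · exact hx
      · exact hEA h
    · intro a ha b hb hab
      rcases Finset.mem_insert.1 (Finset.mem_coe.1 ha) with rfl | ha2 <;>
      rcases Finset.mem_insert.1 (Finset.mem_coe.1 hb) with rfl | hb2
      · exact absurd rfl hab
      · exact hcon b hb2
      · obtain ⟨s, hs, h⟩ := hcon a ha2
        exact ⟨s, hs, by rwa [dist_comm]⟩
      · exact hE a ha2 b hb2 hab
  have := le_csSup hSb hmem
  rw [Finset.card_insert_of_notMem hxE] at this
  omega

lemma near {X : Type*} [MetricSpace X] [CompactSpace X] (f : ℝ → X → X)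
    (hcont : Continuous fun p : ℝ × X => f p.1 p.2) (K : Set X) (hK : IsClosed K)
    (η τ : ℝ) (hη : 0 < η) (hτ : 0 < τ) :
    ∃ k : ℕ, ∀ x, (∀ s ∈ Icc (-(k * τ)) (k * τ), f s x ∈ K) →
      ∃ z, (∀ s, f s z ∈ K) ∧ dist x z < η := by
  let V : ℕ → Set X := fun k => {x | ∀ s ∈ Icc (-(k * τ)) (k * τ), f s x ∈ K}
  have hVc : ∀ k, IsClosed (V k) := by
    intro k
    have : V k = ⋂ s ∈ Icc (-(k * τ)) (k * τ), (fun x => f s x) ⁻¹' K := by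
      ext x; simp [V]
    rw [this]
    exact isClosed_biInter fun s _ => hK.preimage (hcont.comp (by fun_prop : Continuous fun x : X => (s, x)))
  have hanti : Antitone V := by
    intro a b hab x hx s hs
    have h1 : (a:ℝ) * τ ≤ b * τ := by gcongr
    exact hx s ⟨by linarith [hs.1], by linarith [hs.2]⟩
  obtain ⟨k, hk⟩ := exists_subset_nhds_of_isCompact' (V := V)
    (U := {x | ∃ z, (∀ s, f s z ∈ K) ∧ dist x z < η}) hanti.directed_ge
    (fun k => (hVc k).isCompact) hVc (by
      intro z hz
      have hzK : ∀ s, f s z ∈ K := by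
        intro s
        obtain ⟨k, hk⟩ := exists_nat_ge (|s| / τ)
        rw [div_le_iff₀ hτ] at hk
        exact mem_iInter.1 hz k s (abs_le.1 hk)
      filter_upwards [Metric.ball_mem_nhds z hη] with x hx
      exact ⟨z, hzK, hx⟩)
  exact ⟨k, fun x hx => hk hx⟩

lemma count {X : Type*} (E : Finset X) (N : ℕ) (c : X → Fin N → X)
    (hinj : Set.InjOn c E) (S : Fin N → Finset X) (hc : ∀ x ∈ E, ∀ j, c x j ∈ S j)
    (W w : X → ℝ) (hw : ∀ y, 0 ≤ w y) (a : ℝ) (ha : 0 ≤ a)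
    (hW : ∀ x ∈ E, W x ≤ a * ∏ j, w (c x j)) :
    ∑ x ∈ E, W x ≤ a * ∏ j, ∑ y ∈ S j, w y := by
  classical
  rw [Finset.prod_univ_sum]
  calc ∑ x ∈ E, W x ≤ ∑ x ∈ E, a * ∏ j, w (c x j) := Finset.sum_le_sum hW
    _ = a * ∑ x ∈ E, ∏ j, w (c x j) := by rw [Finset.mul_sum]
    _ = a * ∑ p ∈ E.image c, ∏ j, w (p j) := by rw [Finset.sum_image hinj]
    _ ≤ _ := by
      refine mul_le_mul_of_nonneg_left ?_ ha
      apply Finset.sum_le_sum_of_subset_of_nonneg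
      · intro p hp
        obtain ⟨x, hx, rfl⟩ := Finset.mem_image.1 hp
        exact Fintype.mem_piFinset.2 (hc x hx)
      · intro p _ _
        exact Finset.prod_nonneg fun j _ => hw _

lemma split {X : Type*} [MetricSpace X] (f : ℝ → X → X)
    (hcont : Continuous fun p : ℝ × X => f p.1 p.2)
    (hadd : ∀ s t : ℝ, ∀ x : X, f (s + t) x = f s (f t x))
    (φ : X → ℝ) (hφ : Continuous φ) (x : X) (τ : ℝ) (N : ℕ) :
    ∫ s in (0:ℝ)..(N * τ), φ (f s x) =
      ∑ j : Fin N, ∫ s in (0:ℝ)..τ, φ (f s (f (j * τ) x)) := by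
  have hc : Continuous fun s => φ (f s x) :=
    hφ.comp (hcont.comp (by fun_prop : Continuous fun s : ℝ => (s, x)))
  have := intervalIntegral.sum_integral_adjacent_intervals (μ := MeasureTheory.volume)
    (f := fun s => φ (f s x)) (a := fun j : ℕ => (j:ℝ) * τ) (n := N)
    (fun k _ => hc.intervalIntegrable _ _)
  simp only [Nat.cast_zero, zero_mul] at this
  rw [← this, Finset.sum_range]
  refine Finset.sum_congr rfl fun j _ => ?_
  simp_rw [← hadd]
  rw [intervalIntegral.integral_comp_add_right (fun s => φ (f s x))]
  congr 1 <;> push_cast <;> ring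

lemma int_le {X : Type*} [MetricSpace X] (f : ℝ → X → X)
    (hcont : Continuous fun p : ℝ × X => f p.1 p.2)
    (φ : X → ℝ) (hφ : Continuous φ) (x y : X) (τ v : ℝ) (hτ : 0 ≤ τ)
    (h : ∀ s ∈ Icc (0:ℝ) τ, φ (f s x) ≤ v + φ (f s y)) :
    ∫ s in (0:ℝ)..τ, φ (f s x) ≤ τ * v + ∫ s in (0:ℝ)..τ, φ (f s y) := by
  have hc : ∀ x, Continuous fun s => φ (f s x) := fun x =>
    hφ.comp (hcont.comp (by fun_prop : Continuous fun s : ℝ => (s, x)))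
  have h1 : ∫ s in (0:ℝ)..τ, φ (f s x) ≤ ∫ s in (0:ℝ)..τ, (v + φ (f s y)) :=
    intervalIntegral.integral_mono_on (μ := MeasureTheory.volume) hτ
    ((hc x).intervalIntegrable _ _)
    ((continuous_const.add (hc y)).intervalIntegrable _ _) h
  rw [intervalIntegral.integral_add (continuous_const.intervalIntegrable _ _)
    ((hc y).intervalIntegrable _ _)] at h1
  simpa using h1

/-- main finite estimate -/
lemma main_est {X : Type*} [MetricSpace X] [CompactSpace X]
    (f : ℝ → X → X)
    (hcont : Continuous fun p : ℝ × X => f p.1 p.2)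
    (hadd : ∀ s t : ℝ, ∀ x : X, f (s + t) x = f s (f t x))
    (U : Set X)
    (hne : {x : X | ∀ t : ℝ, f t x ∈ closure U}.Nonempty)
    (φ : X → ℝ) (hφ : Continuous φ) (δ v τ : ℝ) (hδ : 0 < δ) (hv0 : 0 ≤ v)
    (hv : ∀ x y, dist x y ≤ 2 * δ → φ x ≤ v + φ y) (hτ : 0 < τ) :
    ∃ Z : ℝ, 0 < Z ∧
      ENNReal.ofReal Z ≤ partitionFn f φ
        ({x : X | ∀ t : ℝ, f t x ∈ closure U} ×ˢ Set.Ioi (0 : ℝ)) δ τ ∧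
      ∃ K : ℝ, ∀ t > 0, partitionFn f φ (orbitSegments f U) (4 * δ) t ≤
        ENNReal.ofReal (Real.exp (K + t * (v + Real.log Z / τ))) := by
  classical
  set L := {x : X | ∀ t : ℝ, f t x ∈ closure U} with hL
  let w : X → ℝ := fun y => Real.exp (∫ s in (0:ℝ)..τ, φ (f s y))
  have hw : ∀ y, 0 < w y := fun y => Real.exp_pos _
  obtain ⟨EL, hELL, hELsep, hEL⟩ := exists_max f hcont τ δ hδ L
  obtain ⟨EX, -, -, hEX⟩ := exists_max f hcont τ δ hδ univ
  obtain ⟨η, hη, hu⟩ := unif f hcont τ δ hδ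
  obtain ⟨k, hk⟩ := near f hcont (closure U) isClosed_closure η τ hη hτ
  obtain ⟨M, hM0, hM⟩ : ∃ M : ℝ, 0 ≤ M ∧ ∀ x, |φ x| ≤ M := by
    obtain ⟨M, hM⟩ := (isCompact_univ (X := X)).exists_bound_of_continuousOn hφ.continuousOn
    exact ⟨max M 0, le_max_right _ _, fun x => (hM x (mem_univ x)).trans (le_max_left _ _)⟩
  set Z := ∑ y ∈ EL, w y with hZ
  have hELne : EL.Nonempty := by
    obtain ⟨x, hx⟩ := hne
    obtain ⟨y, hy, -⟩ := hEL x hx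
    exact ⟨y, hy⟩
  have hZpos : 0 < Z := Finset.sum_pos (fun y _ => hw y) hELne
  set B : ℝ := max 1 ((∑ y ∈ EX, w y) / Z) with hB
  have hB1 : 1 ≤ B := le_max_left _ _
  have hBX : ∑ y ∈ EX, w y ≤ Z * B := by
    have := le_max_right 1 ((∑ y ∈ EX, w y) / Z)
    rw [div_le_iff₀ hZpos] at this
    linarith
  refine ⟨Z, hZpos, ?_, τ * M + τ * v + |Real.log Z| + (2 * k + 1) * Real.log B, ?_⟩
  · rw [hZ, ENNReal.ofReal_sum_of_nonneg (fun y _ => (hw y).le)]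
    unfold partitionFn
    refine le_iSup_of_le EL (le_iSup_of_le ?_ (le_iSup_of_le hELsep le_rfl))
    intro x hx
    exact ⟨hELL hx, hτ⟩
  intro t ht
  refine iSup_le fun E => iSup_le fun hE => iSup_le fun hsep => ?_
  rw [← ENNReal.ofReal_sum_of_nonneg (fun y _ => (Real.exp_pos _).le)]
  refine ENNReal.ofReal_le_ofReal ?_
  set n := ⌊t / τ⌋₊ with hn
  have hn1 : n * τ ≤ t := by
    rw [← le_div_iff₀ hτ]; exact Nat.floor_le (by positivity)
  have hn2 : t < (n + 1) * τ := by
    rw [← div_lt_iff₀ hτ]; exact Nat.lt_floor_add_one _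
  let S : Fin (n+1) → Finset X := fun j => if k ≤ (j:ℕ) ∧ (j:ℕ) + k < n then EL else EX
  have hcode : ∀ x : X, ∀ j : Fin (n+1), ∃ y, x ∈ E → (y ∈ S j ∧
      ∀ s ∈ Icc (0:ℝ) τ, dist (f s (f (j * τ) x)) (f s y) ≤ 2 * δ) := by
    intro x j
    by_cases hx : x ∈ E
    swap
    · exact ⟨x, fun h => absurd h hx⟩
    by_cases hj : k ≤ (j:ℕ) ∧ (j:ℕ) + k < n
    · obtain ⟨z, hz, hxz⟩ := hk (f (j * τ) x) (by
        intro s hs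
        rw [← hadd]
        apply subset_closure
        apply (hE hx).2
        have h1 : (k:ℝ) * τ ≤ (j:ℕ) * τ := by
          have : (k:ℝ) ≤ (j:ℕ) := by exact_mod_cast hj.1
          gcongr
        have h2 : ((j:ℕ) + k : ℝ) * τ < n * τ := by
          have : ((j:ℕ) + k : ℝ) < n := by exact_mod_cast hj.2
          gcongr
        constructor
        · linarith [hs.1]
        · show s + (j:ℕ) * τ < t
          linarith [hs.2])
      obtain ⟨y, hy, hyz⟩ := hEL z hz
      refine ⟨y, fun _ => ⟨by simp only [S, if_pos hj]; exact hy, fun s hs => ?_⟩⟩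
      have := dist_triangle (f s (f (j * τ) x)) (f s z) (f s y)
      have := hu _ _ hxz s hs
      have := hyz s hs
      linarith
    · obtain ⟨y, hy, hyz⟩ := hEX (f (j * τ) x) (mem_univ _)
      refine ⟨y, fun _ => ⟨by simp only [S, if_neg hj]; exact hy, fun s hs => ?_⟩⟩
      have := hyz s hs
      linarith
  choose c hc using hcode
  have hinj : Set.InjOn c E := by
    intro x hx y hy hxy
    by_contra hne
    obtain ⟨s, hs, hlt⟩ := hsep x hx y hy hne
    have hjn : ⌊s / τ⌋₊ < n + 1 := by
      apply Nat.lt_succ_of_le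
      apply Nat.floor_le_floor
      have := hs.2
      gcongr
    have hs1 : (⌊s / τ⌋₊ : ℝ) * τ ≤ s := by
      rw [← le_div_iff₀ hτ]; exact Nat.floor_le (div_nonneg hs.1 hτ.le)
    have hs2 : s < (⌊s / τ⌋₊ + 1) * τ := by
      rw [← div_lt_iff₀ hτ]; exact Nat.lt_floor_add_one _
    have hr : s - (⌊s / τ⌋₊ : ℝ) * τ ∈ Icc (0:ℝ) τ := ⟨by linarith, by linarith⟩
    have h1 := (hc x ⟨_, hjn⟩ hx).2 _ hr
    have h2 := (hc y ⟨_, hjn⟩ hy).2 _ hr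
    rw [← hadd] at h1 h2
    simp only [sub_add_cancel] at h1 h2
    rw [← hxy] at h2
    have := dist_triangle_right (f s x) (f s y) (f (s - (⌊s / τ⌋₊ : ℝ) * τ) (c x ⟨_, hjn⟩))
    linarith
  have hW : ∀ x ∈ E, Real.exp (∫ s in (0:ℝ)..t, φ (f s x)) ≤
      Real.exp (τ * M + (n+1) * (τ * v)) * ∏ j, w (c x j) := by
    intro x hx
    simp only [w]
    rw [← Real.exp_sum, ← Real.exp_add]
    apply Real.exp_le_exp.2
    have hcx : Continuous fun s => φ (f s x) :=
      hφ.comp (hcont.comp (by fun_prop : Continuous fun s : ℝ => (s, x)))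
    have e1 := split f hcont hadd φ hφ x τ (n+1)
    have e2 := intervalIntegral.integral_add_adjacent_intervals (μ := MeasureTheory.volume)
      (hcx.intervalIntegrable 0 t) (hcx.intervalIntegrable t ((n+1 : ℕ) * τ))
    have e3 : ‖∫ s in t..((n+1 : ℕ) * τ), φ (f s x)‖ ≤ M * |((n+1 : ℕ) * τ) - t| :=
      intervalIntegral.norm_integral_le_of_norm_le_const fun s _ => hM _
    have e4 : M * |((n+1 : ℕ) * τ) - t| ≤ τ * M := by
      rw [mul_comm]
      gcongr
      push_cast
      rw [abs_le]; constructor <;> linarith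
    have e5 := (abs_le.1 (e3.trans e4)).1
    have e6 : ∑ j : Fin (n+1), ∫ s in (0:ℝ)..τ, φ (f s (f (j * τ) x)) ≤
        ∑ j : Fin (n+1), (τ * v + ∫ s in (0:ℝ)..τ, φ (f s (c x j))) := by
      refine Finset.sum_le_sum fun j _ => ?_
      exact int_le f hcont φ hφ _ _ τ v hτ.le fun s hs => hv _ _ ((hc x j hx).2 s hs)
    rw [Finset.sum_add_distrib] at e6
    simp only [Finset.sum_const, Finset.card_univ, Fintype.card_fin, nsmul_eq_mul] at e6
    push_cast at *
    linarith
  have hfin := count E (n+1) c hinj S (fun x hx j => (hc x j hx).1) _ w (fun y => (hw y).le)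
    _ (Real.exp_pos _).le hW
  refine hfin.trans ?_
  have hprod : ∏ j, ∑ y ∈ S j, w y ≤ Z ^ (n+1) * B ^ (2 * k + 1) := by
    calc ∏ j, ∑ y ∈ S j, w y ≤ ∏ j : Fin (n+1), Z * (if k ≤ (j:ℕ) ∧ (j:ℕ) + k < n then 1 else B) := by
          refine Finset.prod_le_prod (fun j _ => Finset.sum_nonneg fun y _ => (hw y).le) fun j _ => ?_
          by_cases hj : k ≤ (j:ℕ) ∧ (j:ℕ) + k < n
          · simp only [S, if_pos hj, mul_one]; exact le_rfl
          · simp only [S, if_neg hj]; exact hBX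
      _ = Z ^ (n+1) * ∏ j ∈ Finset.range (n+1), (if k ≤ j ∧ j + k < n then 1 else B) := by
          rw [Finset.prod_mul_distrib, Finset.prod_range]
          simp
      _ ≤ Z ^ (n+1) * B ^ (2 * k + 1) := by
          gcongr
          rw [Finset.prod_ite, Finset.prod_const_one, one_mul, Finset.prod_const]
          refine pow_le_pow_right₀ hB1 ?_
          calc _ ≤ (Finset.range k ∪ Finset.Icc (n - k) n).card := by
                apply Finset.card_le_card
                intro j hj
                simp only [Finset.mem_filter, Finset.mem_range, Finset.mem_union, Finset.mem_Icc] at *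
                omega
            _ ≤ _ := by
                refine (Finset.card_union_le _ _).trans ?_
                simp; omega
  calc _ ≤ Real.exp (τ * M + (n+1) * (τ * v)) * (Z ^ (n+1) * B ^ (2 * k + 1)) := by gcongr
    _ = Real.exp (τ * M + (n+1) * (τ * v) + ((n+1) * Real.log Z + (2 * k + 1) * Real.log B)) := by
        have hZe : Z ^ (n+1) = Real.exp ((n+1) * Real.log Z) := by
          rw [← Real.exp_log hZpos, ← Real.exp_nat_mul, Real.log_exp]; push_cast; rfl
        have hBe : B ^ (2*k+1) = Real.exp ((2*k+1) * Real.log B) := by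
          rw [← Real.exp_log (by linarith : 0 < B), ← Real.exp_nat_mul, Real.log_exp]; push_cast; rfl
        rw [hZe, hBe, ← Real.exp_add, ← Real.exp_add]
    _ ≤ _ := by
        apply Real.exp_le_exp.2
        have h1 : (n:ℝ) * τ * v ≤ t * v := by gcongr
        have h2 : (n + 1) * Real.log Z ≤ |Real.log Z| + t * (Real.log Z / τ) := by
          have h3 : ((n:ℝ) + 1 - t / τ) * Real.log Z ≤ |((n:ℝ) + 1 - t / τ) * Real.log Z| := le_abs_self _
          rw [abs_mul] at h3
          have h4 : |(n:ℝ) + 1 - t / τ| ≤ 1 := by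
            have := (le_div_iff₀ hτ).2 hn1
            have := (div_lt_iff₀ hτ).2 hn2
            rw [abs_le]; constructor <;> linarith
          have h5 := mul_le_mul_of_nonneg_right h4 (abs_nonneg (Real.log Z))
          have h6 : t * (Real.log Z / τ) = t / τ * Real.log Z := by ring
          rw [h6]; linarith
        linarith

lemma pressureAt_le {X : Type*} [MetricSpace X] [CompactSpace X]
    (f : ℝ → X → X)
    (hcont : Continuous fun p : ℝ × X => f p.1 p.2)
    (hadd : ∀ s t : ℝ, ∀ x : X, f (s + t) x = f s (f t x))
    (U : Set X)
    (hne : {x : X | ∀ t : ℝ, f t x ∈ closure U}.Nonempty)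
    (φ : X → ℝ) (hφ : Continuous φ) (δ v : ℝ) (hδ : 0 < δ) (hv0 : 0 ≤ v)
    (hv : ∀ x y, dist x y ≤ 2 * δ → φ x ≤ v + φ y) :
    pressureAt f φ (orbitSegments f U) (4 * δ) ≤
      pressureAt f φ ({x : X | ∀ t : ℝ, f t x ∈ closure U} ×ˢ Set.Ioi (0 : ℝ)) δ + (v : EReal) := by
  rw [← EReal.sub_le_iff_le_add (Or.inl (EReal.coe_ne_bot v)) (Or.inl (EReal.coe_ne_top v))]
  refine Filter.le_limsup_of_frequently_le (Eventually.frequently ?_)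
  filter_upwards [eventually_gt_atTop (0:ℝ)] with τ hτ
  rw [EReal.sub_le_iff_le_add (Or.inl (EReal.coe_ne_bot v)) (Or.inl (EReal.coe_ne_top v))]
  obtain ⟨Z, hZ, hZle, K, hK⟩ := main_est f hcont hadd U hne φ hφ δ v τ hδ hv0 hv hτ
  have hlogr : ∀ a : ℝ, 0 < a → ENNReal.log (ENNReal.ofReal a) = ((Real.log a : ℝ) : EReal) := by
    intro a ha
    rw [ENNReal.log_ofReal, if_neg (not_le.2 ha)]
  have hA : (((v + Real.log Z / τ : ℝ)) : EReal) ≤ (((1 : ℝ) / τ : ℝ) : EReal) *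
      ENNReal.log (partitionFn f φ ({x : X | ∀ t : ℝ, f t x ∈ closure U} ×ˢ Set.Ioi (0 : ℝ)) δ τ)
      + (v : EReal) := by
    have h1 := ENNReal.log_monotone hZle
    rw [hlogr Z hZ] at h1
    have h2 : (((1 : ℝ) / τ : ℝ) : EReal) * ((Real.log Z : ℝ) : EReal) ≤ _ :=
      mul_le_mul_of_nonneg_left h1 (by exact_mod_cast (by positivity : (0:ℝ) ≤ 1 / τ))
    calc (((v + Real.log Z / τ : ℝ)) : EReal)
        = (((1 : ℝ) / τ : ℝ) : EReal) * ((Real.log Z : ℝ) : EReal) + (v : EReal) := by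
          rw [← EReal.coe_mul, ← EReal.coe_add]; congr 1; ring
      _ ≤ _ := by gcongr
  refine le_trans ?_ hA
  have hlim : Tendsto (fun t : ℝ => ((K / t + (v + Real.log Z / τ) : ℝ) : EReal)) atTop
      (𝓝 ((v + Real.log Z / τ : ℝ) : EReal)) := by
    apply (continuous_coe_real_ereal.tendsto _).comp
    have : Tendsto (fun t : ℝ => K / t) atTop (𝓝 0) := tendsto_const_nhds.div_atTop tendsto_id
    simpa using this.add_const (v + Real.log Z / τ)
  rw [← hlim.limsup_eq]
  refine Filter.limsup_le_limsup ?_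
  filter_upwards [eventually_gt_atTop (0:ℝ)] with t ht
  have h1 := ENNReal.log_monotone (hK t ht)
  rw [hlogr _ (Real.exp_pos _), Real.log_exp] at h1
  calc _ ≤ (((1 : ℝ) / t : ℝ) : EReal) * ((K + t * (v + Real.log Z / τ) : ℝ) : EReal) :=
        mul_le_mul_of_nonneg_left h1 (by exact_mod_cast (by positivity : (0:ℝ) ≤ 1 / t))
    _ = _ := by
        rw [← EReal.coe_mul]; congr 1; field_simp

lemma partitionFn_mono {X : Type*} [MetricSpace X] (f : ℝ → X → X) (φ : X → ℝ)
    {C D : Set (X × ℝ)} (h : C ⊆ D) {δ δ' : ℝ} (hδ : δ' ≤ δ) (t : ℝ) :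
    partitionFn f φ C δ t ≤ partitionFn f φ D δ' t := by
  unfold partitionFn
  refine iSup_le fun E => iSup_le fun hE => iSup_le fun hs => ?_
  refine le_iSup_of_le E (le_iSup_of_le (fun x hx => h (hE hx)) (le_iSup_of_le ?_ le_rfl))
  intro x hx y hy hxy
  obtain ⟨s, hs, hlt⟩ := hs x hx y hy hxy
  exact ⟨s, hs, hδ.trans_lt hlt⟩

lemma pressureAt_mono {X : Type*} [MetricSpace X] (f : ℝ → X → X) (φ : X → ℝ)
    {C D : Set (X × ℝ)} (h : C ⊆ D) {δ δ' : ℝ} (hδ : δ' ≤ δ) :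
    pressureAt f φ C δ ≤ pressureAt f φ D δ' := by
  refine Filter.limsup_le_limsup ?_
  filter_upwards [eventually_gt_atTop (0:ℝ)] with t ht
  exact mul_le_mul_of_nonneg_left (ENNReal.log_monotone (partitionFn_mono f φ h hδ t))
    (by exact_mod_cast (by positivity : (0:ℝ) ≤ 1 / t))

lemma pressure_mono {X : Type*} [MetricSpace X] (f : ℝ → X → X) (φ : X → ℝ)
    {C D : Set (X × ℝ)} (h : C ⊆ D) : pressure f φ C ≤ pressure f φ D :=
  Filter.limsup_le_limsup (Eventually.of_forall fun _ => pressureAt_mono f φ h le_rfl)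

lemma pressureAt_le_pressure {X : Type*} [MetricSpace X] (f : ℝ → X → X) (φ : X → ℝ)
    (C : Set (X × ℝ)) (δ : ℝ) (hδ : 0 < δ) : pressureAt f φ C δ ≤ pressure f φ C := by
  refine Filter.le_limsup_of_frequently_le (Eventually.frequently ?_)
  filter_upwards [Ioo_mem_nhdsGT hδ] with δ' h'
  exact pressureAt_mono f φ subset_rfl h'.2.le

lemma pressure_le {X : Type*} [MetricSpace X] [CompactSpace X]
    (f : ℝ → X → X)
    (hcont : Continuous fun p : ℝ × X => f p.1 p.2)
    (hadd : ∀ s t : ℝ, ∀ x : X, f (s + t) x = f s (f t x))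
    (U : Set X)
    (hne : {x : X | ∀ t : ℝ, f t x ∈ closure U}.Nonempty)
    (φ : X → ℝ) (hφ : Continuous φ) :
    pressure f φ (orbitSegments f U) ≤
      pressure f φ ({x : X | ∀ t : ℝ, f t x ∈ closure U} ×ˢ Set.Ioi (0 : ℝ)) := by
  set P := pressure f φ ({x : X | ∀ t : ℝ, f t x ∈ closure U} ×ˢ Set.Ioi (0 : ℝ)) with hP
  have key : ∀ v : ℝ, 0 < v → pressure f φ (orbitSegments f U) ≤ P + (v : EReal) := by
    intro v hv
    have hu := CompactSpace.uniformContinuous_of_continuous hφ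
    rw [Metric.uniformContinuous_iff] at hu
    obtain ⟨r, hr, hru⟩ := hu v hv
    refine Filter.limsup_le_of_le (h := ?_)
    filter_upwards [Ioo_mem_nhdsGT hr] with δ hδ
    have h1 := pressureAt_le f hcont hadd U hne φ hφ (δ / 4) v (by linarith [hδ.1]) hv.le (by
      intro x y hxy
      have := hru (a := x) (b := y) (by linarith [hδ.1, hδ.2])
      rw [Real.dist_eq] at this
      linarith [le_abs_self (φ x - φ y)])
    rw [mul_div_cancel₀ _ (by norm_num : (4:ℝ) ≠ 0)] at h1
    refine h1.trans ?_
    gcongr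
    exact pressureAt_le_pressure f φ _ _ (by linarith [hδ.1])
  refine ge_of_tendsto (x := 𝓝[>] (0:ℝ)) (f := fun v : ℝ => P + (v : EReal)) ?_
    (by filter_upwards [self_mem_nhdsWithin] with v hv using key v hv)
  have hc : ContinuousAt (fun p : EReal × EReal => p.1 + p.2) (P, ((0:ℝ):EReal)) :=
    EReal.continuousAt_add (Or.inr (EReal.coe_ne_bot 0)) (Or.inr (EReal.coe_ne_top 0))
  have h2 : Tendsto (fun v : ℝ => (P, (v : EReal))) (𝓝[>] 0) (𝓝 (P, ((0:ℝ):EReal))) :=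
    ((continuous_const.prodMk continuous_coe_real_ereal).tendsto (0:ℝ)).mono_left nhdsWithin_le_nhds
  have := hc.tendsto.comp h2
  simpa [Function.comp_def] using this

end PEq

/-- **Equality of pressures on isolating neighborhoods** (Lemma 3.1).  If `U` is an
isolating neighborhood of the maximal invariant set
`Λ = {x : f_t(x) ∈ closure U for all t}` (nonempty with `Λ ⊆ U`), `U₁` is any open set
with `Λ ⊆ U₁ ⊆ U` and `φ` is continuous, then
`P(O(U), φ) = P(O(U₁), φ) = P(Λ×(0,∞), φ) = P(φ, X|_Λ)`. -/
theorem pressure_eq_on_isolating_neighborhood {X : Type*} [MetricSpace X] [CompactSpace X]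
    (f : ℝ → X → X)
    (hcont : Continuous fun p : ℝ × X => f p.1 p.2)
    (hf0 : ∀ x : X, f 0 x = x)
    (hadd : ∀ s t : ℝ, ∀ x : X, f (s + t) x = f s (f t x))
    (U : Set X) (hU : IsOpen U)
    (hne : {x : X | ∀ t : ℝ, f t x ∈ closure U}.Nonempty)
    (hiso : {x : X | ∀ t : ℝ, f t x ∈ closure U} ⊆ U)
    (U₁ : Set X) (hU₁ : IsOpen U₁)
    (hsub₁ : {x : X | ∀ t : ℝ, f t x ∈ closure U} ⊆ U₁) (hsub₂ : U₁ ⊆ U)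
    (φ : X → ℝ) (hφ : Continuous φ) :
    pressure f φ (orbitSegments f U) = pressure f φ (orbitSegments f U₁) ∧
    pressure f φ (orbitSegments f U₁) =
      pressure f φ ({x : X | ∀ t : ℝ, f t x ∈ closure U} ×ˢ Set.Ioi (0 : ℝ)) := by
  have h1 := PEq.pressure_le f hcont hadd U hne φ hφ
  have h2 : pressure f φ (orbitSegments f U₁) ≤ pressure f φ (orbitSegments f U) :=
    PEq.pressure_mono f φ fun p hp => ⟨hp.1, fun s hs => hsub₂ (hp.2 s hs)⟩
  have h3 : pressure f φ ({x : X | ∀ t : ℝ, f t x ∈ closure U} ×ˢ Set.Ioi (0 : ℝ)) ≤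
      pressure f φ (orbitSegments f U₁) := by
    refine PEq.pressure_mono f φ fun p hp => ⟨hp.2, fun s _ => hsub₁ ?_⟩
    intro t
    rw [← hadd]
    exact hp.1 _
  exact ⟨le_antisymm (h1.trans h3) h2, le_antisymm (h2.trans h1) h3⟩
end

section
/- Let X be a compact metric space and f : X → X a continuous map. Let θ₀ ∈ (0,1] and β₁ ∈ (0,1). Let W ⊆ X be a Borel set, let Σ ⊆ W be a set of fixed points of f, and let S ⊆ X be a Borel set with S ∩ W = ∅. Assume that every ergodic f-invariant Borel probability measure ν on X that is not the Dirac mass at a point of Σ satisfies ν(S) ≥ θ₀ − ν(W). Then every f-invariant Borel probability measure μ with μ(W) < β₁ satisfies μ(S) > θ₀ − 2β₁. -/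
open MeasureTheory
open Filter Topology ProbabilityTheory

lemma edk_exists_kernel {X : Type*} [MeasurableSpace X] [StandardBorelSpace X]
    (f : X → X) (μ : Measure X) [IsProbabilityMeasure μ] (hμ : MeasurePreserving f μ μ) :
    ∃ κ : X → Measure X, (∀ x, IsProbabilityMeasure (κ x)) ∧
      (∀ B, MeasurableSet B → Integrable (fun x => (κ x).real B) μ) ∧
      (∀ B, MeasurableSet B → ∫ x, (κ x).real B ∂μ = μ.real B) ∧
      (∀ P : X → Prop, (∀ᵐ x ∂μ, P x) → ∀ᵐ x ∂μ, ∀ᵐ y ∂(κ x), P y) ∧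
      (∀ C, MeasurableSet C → f ⁻¹' C = C → ∀ᵐ x ∂μ, (κ x).real C = C.indicator 1 x) ∧
      (∀ B, MeasurableSet B → ∀ᵐ x ∂μ, (κ x).real (f ⁻¹' B) = (κ x).real B) := by
  have hm := MeasurableSpace.invariants_le f
  refine ⟨fun x => condExpKernel μ (MeasurableSpace.invariants f) x, fun x => inferInstance,
    fun B hB => integrable_toReal_condExpKernel hB, ?_, ?_, ?_, ?_⟩
  · intro B hB
    rw [integral_congr_ae (condExpKernel_ae_eq_condExp hm hB), integral_condExp hm]
    simp [integral_indicator, hB]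
  · intro P hP
    apply ae_of_ae_trim hm
    apply Measure.ae_ae_of_ae_comp
    rwa [condExpKernel_comp_trim hm]
  · intro C hC hfC
    have h1 := condExpKernel_ae_eq_condExp (μ := μ) hm hC
    have hC' : MeasurableSet[MeasurableSpace.invariants f] C := ⟨hC, hfC⟩
    rw [condExp_of_stronglyMeasurable hm] at h1
    · filter_upwards [h1] with x hx
      rw [hx]; rfl
    · exact stronglyMeasurable_const.indicator hC'
    · exact (integrable_const _).indicator hC
  · intro B hB
    have hfB := hμ.measurable hB
    have h1 := condExpKernel_ae_eq_condExp (μ := μ) hm hB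
    have h2 := condExpKernel_ae_eq_condExp (μ := μ) hm hfB
    have h3 : μ⟦B | MeasurableSpace.invariants f⟧ =ᵐ[μ] μ⟦f ⁻¹' B | MeasurableSpace.invariants f⟧ := by
      apply ae_eq_condExp_of_forall_setIntegral_eq hm
      · exact (integrable_const _).indicator hfB
      · intros; exact integrable_condExp.integrableOn
      · intro C hC _
        rw [setIntegral_condExp hm ((integrable_const _).indicator hB) hC,
          setIntegral_indicator hB, setIntegral_indicator hfB]
        simp only [integral_const, smul_eq_mul, mul_one, measureReal_restrict_apply_univ]
        rw [← hμ.measureReal_preimage (hC.1.inter hB).nullMeasurableSet, Set.preimage_inter, hC.2]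
      · exact stronglyMeasurable_condExp.aestronglyMeasurable
    filter_upwards [h1, h2, h3] with x e1 e2 e3
    rw [e1, e2, e3]

lemma edk_subseq {X : Type*} [MeasurableSpace X]
    (f : X → X) (μ : Measure X) [IsProbabilityMeasure μ] (hμ : MeasurePreserving f μ μ)
    (B : Set X) (hB : MeasurableSet B) :
    ∃ (ns : ℕ → ℕ) (g : X → ℝ), StrictMono ns ∧ Measurable g ∧ (∀ x, g (f x) = g x) ∧
      ∀ᵐ x ∂μ, Tendsto (fun k => birkhoffAverage ℝ f (B.indicator (1 : X → ℝ)) (ns k) x) atTop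
        (𝓝 (g x)) := by
  set φ : X → ℝ := B.indicator 1 with hφ
  have hφm : Measurable φ := measurable_one.indicator hB
  have hL : MemLp φ 2 μ := MemLp.indicator hB (memLp_const (1:ℝ))
  let T : Lp ℝ 2 μ →L[ℝ] Lp ℝ 2 μ := (Lp.compMeasurePreservingₗᵢ ℝ f hμ).toContinuousLinearMap
  have hT : ‖T‖ ≤ 1 := LinearIsometry.norm_toContinuousLinearMap_le _
  have h1 := T.tendsto_birkhoffAverage_orthogonalProjection hT (hL.toLp φ)
  obtain ⟨ns, hns, hae⟩ := (tendstoInMeasure_of_tendsto_Lp h1).exists_seq_tendsto_ae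
  have hit : ∀ n, T^[n] (hL.toLp φ) = (hL.comp_measurePreserving (hμ.iterate n)).toLp _ := by
    intro n
    change (Lp.compMeasurePreserving f hμ)^[n] _ = _
    rw [Lp.compMeasurePreserving_iterate]
    rfl
  have hav : ∀ n, (birkhoffAverage ℝ T _root_.id n (hL.toLp φ) : Lp ℝ 2 μ) =ᵐ[μ]
      birkhoffAverage ℝ f φ n := by
    intro n
    have hs : ∀ n, ((birkhoffSum T _root_.id n (hL.toLp φ) : Lp ℝ 2 μ) : X → ℝ) =ᵐ[μ]
        birkhoffSum f φ n := by
      intro n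
      induction n with
      | zero => simpa [birkhoffSum_zero'] using Lp.coeFn_zero ℝ 2 μ
      | succ n ih =>
        rw [birkhoffSum_succ]
        refine (Lp.coeFn_add _ _).trans ?_
        have h2 : ((_root_.id (T^[n] (hL.toLp φ)) : Lp ℝ 2 μ) : X → ℝ) =ᵐ[μ] φ ∘ f^[n] := by
          rw [hit]; exact MemLp.coeFn_toLp _
        filter_upwards [ih, h2] with x e1 e2
        rw [Pi.add_apply, e1, e2, birkhoffSum_succ]; rfl
    unfold birkhoffAverage
    filter_upwards [Lp.coeFn_smul ((n:ℝ)⁻¹) (birkhoffSum T _root_.id n (hL.toLp φ)), hs n]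
      with x e1 e2
    rw [e1, Pi.smul_apply, e2]
  have hae' : ∀ᵐ x ∂μ, ∃ l, Tendsto (fun k => birkhoffAverage ℝ f φ (ns k) x) atTop (𝓝 l) := by
    filter_upwards [hae, ae_all_iff.2 hav] with x e1 e2
    simp only [e2] at e1
    exact ⟨_, e1⟩
  have hmeas : ∀ n, Measurable (birkhoffAverage ℝ f φ n) := by
    intro n
    unfold birkhoffAverage birkhoffSum
    have hsum : Measurable (fun x => ∑ k ∈ Finset.range n, φ (f^[k] x)) := by
      refine Finset.measurable_fun_sum _ fun i _ => ?_
      exact hφm.comp (hμ.measurable.iterate i)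
    exact hsum.const_smul ((n : ℝ)⁻¹)
  refine ⟨ns, fun x => limUnder atTop (fun k => birkhoffAverage ℝ f φ (ns k) x), hns,
    (StronglyMeasurable.limUnder fun k => (hmeas (ns k)).stronglyMeasurable).measurable, ?_, ?_⟩
  · intro x
    have hb : Bornology.IsBounded (Set.range φ) := by
      refine (Metric.isBounded_closedBall (x := (0:ℝ)) (r := 1)).subset ?_
      rintro _ ⟨y, rfl⟩
      by_cases hy : y ∈ B <;> simp [hφ, hy]
    have h0 := (tendsto_birkhoffAverage_apply_sub_birkhoffAverage' ℝ hb f x).comp hns.tendsto_atTop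
    have : ∀ l, Tendsto (fun k => birkhoffAverage ℝ f φ (ns k) (f x)) atTop (𝓝 l) ↔
        Tendsto (fun k => birkhoffAverage ℝ f φ (ns k) x) atTop (𝓝 l) := by
      intro l
      constructor
      · intro h; simpa using h.sub h0
      · intro h; simpa using h.add h0
    have h2 : (fun l : ℝ => map (fun k => birkhoffAverage ℝ f φ (ns k) (f x)) atTop ≤ 𝓝 l) =
        (fun l : ℝ => map (fun k => birkhoffAverage ℝ f φ (ns k) x) atTop ≤ 𝓝 l) := by
      funext l
      exact propext (this l)
    simp only [limUnder, lim]
    rw [h2]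
  · filter_upwards [hae'] with x hx
    exact tendsto_nhds_limUnder hx

lemma edk_indep {X : Type*} [MeasurableSpace X]
    (f : X → X) (ν : Measure X) [IsProbabilityMeasure ν] (hν : MeasurePreserving f ν ν)
    (B : Set X) (hB : MeasurableSet B) (ns : ℕ → ℕ) (hns : StrictMono ns) (c : ℝ)
    (hc : ∀ᵐ y ∂ν, Tendsto (fun k => birkhoffAverage ℝ f (B.indicator (1 : X → ℝ)) (ns k) y) atTop
        (𝓝 c)) (C : Set X) (hC : MeasurableSet C) (hfC : f ⁻¹' C = C) :
    ν.real (B ∩ C) = ν.real B * ν.real C := by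
  set φ : X → ℝ := B.indicator 1 with hφ
  have hφm : Measurable φ := measurable_one.indicator hB
  have hφ1 : ∀ x, ‖φ x‖ ≤ 1 := by
    intro y
    by_cases hy : y ∈ B <;> simp [hφ, hy]
  have hmeas : ∀ n, Measurable (birkhoffAverage ℝ f φ n) := by
    intro n
    unfold birkhoffAverage birkhoffSum
    have hsum : Measurable (fun x => ∑ k ∈ Finset.range n, φ (f^[k] x)) := by
      refine Finset.measurable_fun_sum _ fun i _ => ?_
      exact hφm.comp (hν.measurable.iterate i)
    exact hsum.const_smul ((n : ℝ)⁻¹)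
  have key : ∀ D, MeasurableSet D → f ⁻¹' D = D → ν.real (B ∩ D) = c * ν.real D := by
    intro D hD hfD
    have hone : ∀ n, ∫ y in D, φ (f^[n] y) ∂ν = ν.real (B ∩ D) := by
      intro n
      have : (fun y => φ (f^[n] y)) = (f^[n] ⁻¹' B).indicator 1 := by
        funext y; rfl
      have hn := hν.iterate n
      rw [this, integral_indicator_one (hn.measurable hB),
        measureReal_restrict_apply (hn.measurable hB),
        ← hn.measureReal_preimage (hB.inter hD).nullMeasurableSet, Set.preimage_inter,
        (Function.IsFixedPt.preimage_iterate hfD n : f^[n] ⁻¹' D = D)]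
    have hint : ∀ n : ℕ, n ≠ 0 → ∫ y in D, birkhoffAverage ℝ f φ n y ∂ν = ν.real (B ∩ D) := by
      intro n hn
      unfold birkhoffAverage birkhoffSum
      rw [integral_smul, integral_finsetSum]
      · simp only [hone]
        simp [hn]
      · intro i _
        refine Integrable.of_bound (C := 1)
          (hφm.comp (hν.measurable.iterate i)).aestronglyMeasurable
          (Eventually.of_forall fun y => hφ1 _)
    have hlim : Tendsto (fun k => ∫ y in D, birkhoffAverage ℝ f φ (ns k) y ∂ν) atTop
        (𝓝 (∫ y in D, c ∂ν)) := by
      refine tendsto_integral_of_dominated_convergence (fun _ => (1:ℝ)) ?_ ?_ ?_ ?_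
      · intro n; exact (hmeas _).aestronglyMeasurable
      · exact integrable_const _
      · intro k
        refine Eventually.of_forall fun y => ?_
        unfold birkhoffAverage birkhoffSum
        rw [norm_smul, norm_inv, Real.norm_natCast]
        have h1 : ‖∑ i ∈ Finset.range (ns k), φ (f^[i] y)‖ ≤ (ns k : ℝ) := by
          refine (norm_sum_le_of_le _ (fun i _ => hφ1 _)).trans ?_
          simp
        calc _ ≤ ((ns k : ℝ))⁻¹ * (ns k : ℝ) := by gcongr
          _ ≤ 1 := inv_mul_le_one
      · exact ae_restrict_of_ae hc
    have hlim2 : Tendsto (fun k => ∫ y in D, birkhoffAverage ℝ f φ (ns k) y ∂ν) atTop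
        (𝓝 (ν.real (B ∩ D))) := by
      refine tendsto_const_nhds.congr' ?_
      filter_upwards [hns.tendsto_atTop.eventually (eventually_ne_atTop 0)] with k hk
      rw [hint _ hk]
    have := tendsto_nhds_unique hlim2 hlim
    rw [this]; simp [mul_comm]
  have h1 := key Set.univ MeasurableSet.univ rfl
  have h2 := key C hC hfC
  simp at h1
  rw [h2, h1]

lemma edk_ergodic {X : Type*} [MeasurableSpace X] [StandardBorelSpace X]
    (f : X → X) (μ : Measure X) [IsProbabilityMeasure μ] (hμ : MeasurePreserving f μ μ)
    (κ : X → Measure X) (hκ : ∀ x, IsProbabilityMeasure (κ x))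
    (hae : ∀ P : X → Prop, (∀ᵐ x ∂μ, P x) → ∀ᵐ x ∂μ, ∀ᵐ y ∂(κ x), P y)
    (hI : ∀ C, MeasurableSet C → f ⁻¹' C = C → ∀ᵐ x ∂μ, (κ x).real C = C.indicator 1 x)
    (hinv : ∀ B, MeasurableSet B → ∀ᵐ x ∂μ, (κ x).real (f ⁻¹' B) = (κ x).real B) :
    ∀ᵐ x ∂μ, Ergodic f (κ x) := by
  let 𝒜 : Set (Set X) := generateSetAlgebra (MeasurableSpace.countableGeneratingSet X)
  have hcount : 𝒜.Countable :=
    countable_generateSetAlgebra MeasurableSpace.countable_countableGeneratingSet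
  have hgen : ‹MeasurableSpace X› = MeasurableSpace.generateFrom 𝒜 := by
    rw [generateFrom_generateSetAlgebra_eq, MeasurableSpace.generateFrom_countableGeneratingSet]
  have hpi : IsPiSystem 𝒜 := fun s hs t ht _ => isSetAlgebra_generateSetAlgebra.inter_mem hs ht
  have hA : ∀ B ∈ 𝒜, MeasurableSet B := fun B hB => by
    rw [hgen]; exact MeasurableSpace.measurableSet_generateFrom hB
  have hpres : ∀ᵐ x ∂μ, ∀ B ∈ 𝒜, (κ x).real (f ⁻¹' B) = (κ x).real B :=
    (ae_ball_iff hcount).2 fun B hB => hinv B (hA B hB)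
  have hconv : ∀ᵐ x ∂μ, ∀ B ∈ 𝒜, ∃ (ns : ℕ → ℕ) (c : ℝ), StrictMono ns ∧ ∀ᵐ y ∂(κ x),
      Tendsto (fun k => birkhoffAverage ℝ f (B.indicator (1 : X → ℝ)) (ns k) y) atTop (𝓝 c) := by
    refine (ae_ball_iff hcount).2 fun B hB => ?_
    obtain ⟨ns, g, hns, hg, hgf, hlim⟩ := edk_subseq f μ hμ B (hA B hB)
    have hq : ∀ᵐ x ∂μ, ∀ q : ℚ, (κ x).real (g ⁻¹' Set.Iio (q:ℝ)) =
        (g ⁻¹' Set.Iio (q:ℝ)).indicator 1 x := by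
      refine ae_all_iff.2 fun q => hI _ (hg measurableSet_Iio) ?_
      ext y; simp [hgf]
    filter_upwards [hae _ hlim, hq] with x h1 h2
    have h3 : ∀ᵐ y ∂(κ x), ∀ q : ℚ, (g y < q ↔ g x < q) := by
      refine ae_all_iff.2 fun q => ?_
      have := h2 q
      have hmq : MeasurableSet (g ⁻¹' Set.Iio (q:ℝ)) := hg measurableSet_Iio
      by_cases hx : g x < q
      · have h4 : (κ x).real (g ⁻¹' Set.Iio (q:ℝ)) = 1 := by
          rw [this, Set.indicator_of_mem (by simpa using hx)]; rfl
        rw [measureReal_def, ENNReal.toReal_eq_one_iff, ← mem_ae_iff_prob_eq_one hmq] at h4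
        filter_upwards [h4] with y hy
        simp only [hx, iff_true]; exact hy
      · have h4 : (κ x).real (g ⁻¹' Set.Iio (q:ℝ)) = 0 := by
          rw [this, Set.indicator_of_notMem (by simpa using hx)]
        rw [measureReal_eq_zero_iff] at h4
        filter_upwards [measure_eq_zero_iff_ae_notMem.1 h4] with y hy
        simp only [hx, iff_false]; exact hy
    refine ⟨ns, g x, hns, ?_⟩
    filter_upwards [h1, h3] with y e1 e2
    have : g y = g x := by
      apply le_antisymm
      · by_contra hlt
        obtain ⟨q, hq1, hq2⟩ := exists_rat_btwn (not_le.1 hlt)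
        exact absurd ((e2 q).2 hq1) (not_lt.2 hq2.le)
      · by_contra hlt
        obtain ⟨q, hq1, hq2⟩ := exists_rat_btwn (not_le.1 hlt)
        exact absurd ((e2 q).1 hq1) (not_lt.2 hq2.le)
    rwa [this] at e1
  filter_upwards [hpres, hconv] with x hx1 hx2
  haveI := hκ x
  have hmp : MeasurePreserving f (κ x) (κ x) := by
    refine ⟨hμ.measurable, ?_⟩
    haveI : IsProbabilityMeasure ((κ x).map f) :=
      Measure.isProbabilityMeasure_map hμ.measurable.aemeasurable
    refine ext_of_generate_finite 𝒜 hgen hpi (fun B hB => ?_) (by simp)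
    rw [Measure.map_apply hμ.measurable (hA B hB)]
    exact (measureReal_eq_measureReal_iff).1 (hx1 B hB)
  refine ⟨hmp, ⟨fun C hC hfC => ?_⟩⟩
  have hind : ∀ B ∈ 𝒜, (κ x).real (B ∩ C) = (κ x).real B * (κ x).real C := by
    intro B hB
    obtain ⟨ns, c, hns, hc⟩ := hx2 B hB
    exact edk_indep f (κ x) hmp B (hA B hB) ns hns c hc C hC hfC
  have heq : (κ x).restrict C = (κ x C) • (κ x) := by
    refine ext_of_generate_finite 𝒜 hgen hpi (fun B hB => ?_) (by simp)
    rw [Measure.restrict_apply (hA B hB), Measure.smul_apply, smul_eq_mul]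
    have := hind B hB
    rw [← ENNReal.toReal_eq_toReal_iff' (measure_ne_top _ _)
      (ENNReal.mul_ne_top (measure_ne_top _ _) (measure_ne_top _ _)), ENNReal.toReal_mul, mul_comm]
    exact this
  have h5 : (κ x) Cᶜ = 0 ∨ κ x C = 0 := by
    have := congrArg (fun m : Measure X => m Cᶜ) heq
    simp only [Measure.restrict_apply hC.compl, Set.compl_inter_self, measure_empty,
      Measure.smul_apply, smul_eq_mul] at this
    rcases mul_eq_zero.1 this.symm with h | h
    · exact Or.inr h
    · exact Or.inl h
  rw [eventuallyConst_set]
  rcases h5 with h | h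
  · left; exact mem_ae_iff.2 h
  · right; exact measure_eq_zero_iff_ae_notMem.1 h

/-- **From ergodic measures to invariant measures** (Lemma 8.2, via ergodic
decomposition).  Let `f : X → X` be continuous on a compact metric space, `θ₀ ∈ (0,1]`,
`β₁ ∈ (0,1)`, `W` Borel, `Sing ⊆ W` a set of fixed points of `f`, and `S` Borel with
`S ∩ W = ∅`.  Assume every ergodic `f`-invariant Borel probability measure `ν` that is
not the Dirac mass at a point of `Sing` satisfies `ν(S) ≥ θ₀ − ν(W)`.  Then every
`f`-invariant Borel probability measure `μ` with `μ(W) < β₁` satisfies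
`μ(S) > θ₀ − 2β₁`. -/
theorem invariant_measure_bound_of_ergodic {X : Type*} [MetricSpace X] [CompactSpace X]
    [MeasurableSpace X] [BorelSpace X]
    (f : X → X) (hf : Continuous f)
    (θ₀ β₁ : ℝ) (hθ₀ : 0 < θ₀) (hθ₁ : θ₀ ≤ 1) (hβ₀ : 0 < β₁) (hβ₁ : β₁ < 1)
    (W : Set X) (hW : MeasurableSet W)
    (Sing : Set X) (hSingW : Sing ⊆ W) (hSingFix : ∀ x ∈ Sing, f x = x)
    (S : Set X) (hS : MeasurableSet S) (hSW : S ∩ W = ∅)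
    (herg : ∀ ν : Measure X, IsProbabilityMeasure ν → Ergodic f ν →
      (∀ x ∈ Sing, ν ≠ Measure.dirac x) → θ₀ - (ν W).toReal ≤ (ν S).toReal)
    (μ : Measure X) [IsProbabilityMeasure μ] (hμ : MeasurePreserving f μ μ)
    (hμW : (μ W).toReal < β₁) :
    θ₀ - 2 * β₁ < (μ S).toReal := by
  classical
  have hall : ∀ ν : Measure X, IsProbabilityMeasure ν → Ergodic f ν →
      θ₀ ≤ ν.real (S ∪ W) := by
    intro ν hν he
    have hu : ν.real (S ∪ W) = ν.real S + ν.real W :=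
      measureReal_union (Set.disjoint_iff_inter_eq_empty.2 hSW) hW
    by_cases h : ∀ x ∈ Sing, ν ≠ Measure.dirac x
    · have := herg ν hν he h
      rw [hu, measureReal_def, measureReal_def]; linarith
    · push Not at h
      obtain ⟨x, hx, rfl⟩ := h
      have h1 : (Measure.dirac x).real W = 1 := by
        rw [measureReal_def, Measure.dirac_apply' x hW]
        simp [hSingW hx]
      rw [hu, h1]
      have : 0 ≤ (Measure.dirac x).real S := measureReal_nonneg
      linarith
  obtain ⟨κ, hκ, hint, hmean, hae, hI, hinv⟩ := edk_exists_kernel f μ hμ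
  have herg' := edk_ergodic f μ hμ κ hκ hae hI hinv
  have hmain : θ₀ ≤ μ.real (S ∪ W) := by
    rw [← hmean _ (hS.union hW)]
    calc θ₀ = ∫ _, θ₀ ∂μ := by simp
      _ ≤ _ := by
        refine integral_mono_ae (integrable_const _) (hint _ (hS.union hW)) ?_
        filter_upwards [herg'] with x hx
        exact hall _ (hκ x) hx
  have hu : μ.real (S ∪ W) = μ.real S + μ.real W :=
    measureReal_union (Set.disjoint_iff_inter_eq_empty.2 hSW) hW
  rw [hu, measureReal_def, measureReal_def] at hmain
  linarith
end
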